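/- The functor M ↦ R/(t−1) ⊗_{R[t^{−1}]} M, which sends a Γ-graded R[t^{−1}]-module to the induced Γ̄-graded R/(t−1)-module (where Γ̄ = Γ/ℤγ and the δ̄-component of the image is the image of the sum of the components M_ε over ε ∈ δ + ℤγ), is an equivalence between the category of Γ-graded R[t^{−1}]-modules with degree-preserving homomorphisms and the category of Γ̄-graded R/(t−1)-modules with degree-preserving homomorphisms. -/

import Mathlib

/-!
STATEMENT 17 (Proposition 11.1 of the paper, generalizing Smith–Zhang).
Let `Γ` be a finitely generated abelian group of rank 1 and `R` a `Γ`-graded connected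
`k`-algebra with a surjection `ν : Γ → ℤ` positive on degrees of nonzero components.
Fix `0 ≠ γ ∈ Γ` and a nonzero homogeneous `t ∈ R_γ`.  Then the functor
`M ↦ R/(t−1) ⊗_{R[t⁻¹]} M` (whose `δ̄`-component is the image of the sum of the
components `M_ε` over `ε ∈ δ + ℤγ`) is an equivalence from the category of `Γ`-graded
`R[t⁻¹]`-modules with degree-preserving homomorphisms to the category of
`Γ̄ = Γ/ℤγ`-graded `R/(t−1)`-modules with degree-preserving homomorphisms: it takes
values in graded modules, is fully faithful, and is essentially surjective.
-/

set_option linter.unusedSectionVars false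
set_option synthInstance.maxHeartbeats 1000000
set_option maxHeartbeats 1000000

noncomputable section

open TensorProduct

/-- A `Γ'`-graded module over a ring `B` endowed with a family `ℬ` of `k`-subspaces
(`ℬ δ` being the degree-`δ` component of `B`): a `B`-module with a direct sum
decomposition into `k`-subspaces, compatible with `ℬ`. -/
structure GradedMod (k : Type) [Field k] (B : Type) [CommRing B] [Algebra k B]
    (Γ' : Type) [AddCommGroup Γ'] [DecidableEq Γ'] (ℬ : Γ' → Submodule k B) where
  carrier : Type
  [isAddCommGroup : AddCommGroup carrier]
  [isModule : Module B carrier]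
  [isKModule : Module k carrier]
  [isTower : IsScalarTower k B carrier]
  grading : Γ' → Submodule k carrier
  internal : DirectSum.IsInternal grading
  smul_mem : ∀ (δ ε : Γ') (r : B), r ∈ ℬ δ → ∀ m ∈ grading ε, r • m ∈ grading (δ + ε)

attribute [instance] GradedMod.isAddCommGroup GradedMod.isModule GradedMod.isKModule
  GradedMod.isTower

/-- Degree-preserving `B`-linear maps between graded modules. -/
def GradedHom {k : Type} [Field k] {B : Type} [CommRing B] [Algebra k B]
    {Γ' : Type} [AddCommGroup Γ'] [DecidableEq Γ'] {ℬ : Γ' → Submodule k B}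
    (M M' : GradedMod k B Γ' ℬ) : Type :=
  {f : M.carrier →ₗ[B] M'.carrier //
    ∀ δ, (M.grading δ).map (f.restrictScalars k) ≤ M'.grading δ}

/-! ### General linear algebra of direct sum decompositions -/

section DehomAux

open DirectSum

theorem dehom_internal_of_proj {k ι V : Type} [Field k] [DecidableEq ι] [AddCommGroup V]
    [Module k V] (A : ι → Submodule k V) (W : ι → Type) [∀ i, AddCommGroup (W i)]
    (p : ∀ i, V →+ W i)
    (hinj : ∀ i, ∀ v ∈ A i, p i v = 0 → v = 0)
    (hzero : ∀ i j, i ≠ j → ∀ v ∈ A j, p i v = 0)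
    (htop : ∀ v, v ∈ ⨆ i, A i) : DirectSum.IsInternal A := by
  rw [DirectSum.isInternal_submodule_iff_iSupIndep_and_iSup_eq_top]
  refine ⟨?_, eq_top_iff.mpr fun v _ => htop v⟩
  intro i
  rw [Submodule.disjoint_def]
  intro v hv hv'
  apply hinj i v hv
  clear hv
  induction hv' using Submodule.iSup_induction' with
  | mem j x hx =>
    by_cases hij : j = i
    · subst hij
      simp at hx
      simp [hx]
    · simp only [ne_eq, hij, not_false_eq_true, iSup_pos] at hx
      exact hzero i j (fun h => hij h.symm) x hx
  | zero => simp
  | add x y _ _ hx hy => simp [hx, hy]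

theorem dehom_injective {k ι V V' : Type} [Field k] [DecidableEq ι] [AddCommGroup V]
    [Module k V] [AddCommGroup V'] [Module k V'] (A : ι → Submodule k V)
    (A' : ι → Submodule k V') (hA : DirectSum.IsInternal A) (hA' : DirectSum.IsInternal A')
    (f : V →ₗ[k] V') (hf : ∀ i, ∀ v ∈ A i, f v ∈ A' i)
    (hinj : ∀ i, ∀ v ∈ A i, f v = 0 → v = 0) : Function.Injective f := by
  rw [injective_iff_map_eq_zero]
  intro v hv
  obtain ⟨x, rfl⟩ := hA.2 v
  let F : ∀ i, A i →ₗ[k] A' i := fun i => f.restrict (hf i)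
  have key : ∀ x : ⨁ i, A i, f (DirectSum.coeAddMonoidHom A x)
      = DirectSum.coeAddMonoidHom A' (DirectSum.lmap F x) := by
    intro x
    induction x using DirectSum.induction_on with
    | zero => simp
    | of i x =>
      have : DirectSum.lmap F (DirectSum.of (fun i => A i) i x)
        = DirectSum.of (fun i => A' i) i (F i x) := DirectSum.lmap_lof F i x
      rw [this, DirectSum.coeAddMonoidHom_of, DirectSum.coeAddMonoidHom_of]
      rfl
    | add x y hx hy => simp [map_add, hx, hy]
  rw [key] at hv
  have h0 : DirectSum.lmap F x = 0 := hA'.1 (by rw [hv, map_zero])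
  have : x = 0 := by
    ext i
    have h1 : F i (x i) = 0 := by
      have := congrArg (fun z => z i) h0
      simpa [DirectSum.lmap_apply] using this
    have h2 : f (x i) = 0 := congrArg Subtype.val h1
    simpa using hinj i _ (x i).2 h2
  rw [this, map_zero]

theorem dehom_internal_top {k ι V : Type} [Field k] [DecidableEq ι] [AddCommGroup V]
    [Module k V] {A : ι → Submodule k V} (hA : DirectSum.IsInternal A) (v : V) :
    v ∈ ⨆ i, A i := by
  rw [((DirectSum.isInternal_submodule_iff_iSupIndep_and_iSup_eq_top A).mp hA).2]
  trivial

/-- Extend a family of linear maps from the components of a direct sum. -/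
theorem dehom_exists_ext {k ι V V' : Type} [Field k] [DecidableEq ι] [AddCommGroup V]
    [Module k V] [AddCommGroup V'] [Module k V'] {A : ι → Submodule k V}
    (hA : DirectSum.IsInternal A) (F : ∀ i, A i →ₗ[k] V') :
    ∃ f : V →ₗ[k] V', ∀ i (v : A i), f v = F i v := by
  let e := LinearEquiv.ofBijective (DirectSum.coeLinearMap A) hA
  refine ⟨(DirectSum.toModule k ι V' F) ∘ₗ e.symm.toLinearMap, fun i v => ?_⟩
  have : e.symm v = DirectSum.lof k ι (fun i => A i) i v := by
    rw [LinearEquiv.symm_apply_eq]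
    exact (DirectSum.coeLinearMap_lof A i v).symm
  simp [this]

variable {k L B Γ : Type} [Field k] [CommRing L] [CommRing B] [Algebra k L] [Algebra k B]
  [Algebra L B] [SMulCommClass L k B] [IsScalarTower k L B] [AddCommGroup Γ] [DecidableEq Γ]

/-- The properties of `R[t⁻¹] → R/(t-1)` that are used in the proof. -/
structure Dehom (γ : Γ) (ℒ : Γ → Submodule k L)
    (ℬ : (Γ ⧸ AddSubgroup.zmultiples γ) → Submodule k B) (u : Lˣ) : Prop where
  surj : Function.Surjective (algebraMap L B)
  ker : ∀ a : L, algebraMap L B a = 0 → ∃ c, a = ((u : L) - 1) * c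
  u1 : algebraMap L B u = 1
  hu : ∀ n : ℤ, ((u ^ n : Lˣ) : L) ∈ ℒ (n • γ)
  inj : ∀ n : ℤ, n • γ = 0 → n = 0
  span : ∀ a : L, a ∈ ⨆ δ, ℒ δ
  bar : ∀ d, ∀ b ∈ ℬ d, b ∈ Submodule.span k {x | ∃ ε : Γ,
    (QuotientAddGroup.mk ε : Γ ⧸ AddSubgroup.zmultiples γ) = d ∧
    ∃ a ∈ ℒ ε, x = algebraMap L B a}
  bar' : ∀ δ, ∀ a ∈ ℒ δ, algebraMap L B a ∈ ℬ (QuotientAddGroup.mk δ)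

variable {γ : Γ} {ℒ : Γ → Submodule k L}
    {ℬ : (Γ ⧸ AddSubgroup.zmultiples γ) → Submodule k B} {u : Lˣ}

/-- Same as `FGrading`, in the abstract setting. -/
def dehomGr (γ : Γ) (B : Type) [CommRing B] [Algebra k B]
    [Algebra L B] [SMulCommClass L k B] (M : GradedMod k L Γ ℒ)
    (d : Γ ⧸ AddSubgroup.zmultiples γ) : Submodule k (B ⊗[L] M.carrier) :=
  Submodule.span k {z | ∃ ε : Γ,
    (QuotientAddGroup.mk ε : Γ ⧸ AddSubgroup.zmultiples γ) = d ∧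
    ∃ m ∈ M.grading ε, z = (1 : B) ⊗ₜ[L] m}

namespace Dehom

theorem tmul_smul (H : Dehom γ ℒ ℬ u) (M : Type) [AddCommGroup M] [Module L M] (a : L) (m : M) :
    (1 : B) ⊗ₜ[L] (a • m) = algebraMap L B a • ((1 : B) ⊗ₜ[L] m) := by
  rw [← TensorProduct.smul_tmul, TensorProduct.smul_tmul', Algebra.smul_def, smul_eq_mul]

theorem ksmul (H : Dehom γ ℒ ℬ u) (M : Type) [AddCommGroup M] [Module L M] [Module k M] [IsScalarTower k L M]
    (c : k) (m : M) :
    (1 : B) ⊗ₜ[L] (c • m) = c • ((1 : B) ⊗ₜ[L] m) := by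
  rw [← algebraMap_smul L c m, H.tmul_smul, TensorProduct.smul_tmul', TensorProduct.smul_tmul',
    ← IsScalarTower.algebraMap_apply, algebraMap_smul]

theorem exists_tmul (H : Dehom γ ℒ ℬ u) (M : Type) [AddCommGroup M] [Module L M] (z : B ⊗[L] M) :
    ∃ m : M, z = (1 : B) ⊗ₜ[L] m := by
  induction z using TensorProduct.induction_on with
  | zero => exact ⟨0, by simp⟩
  | tmul b m =>
    obtain ⟨a, rfl⟩ := H.surj b
    refine ⟨a • m, ?_⟩
    rw [H.tmul_smul, TensorProduct.smul_tmul', smul_eq_mul, mul_one]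
  | add x y hx hy =>
    obtain ⟨m, rfl⟩ := hx
    obtain ⟨m', rfl⟩ := hy
    exact ⟨m + m', by rw [TensorProduct.tmul_add]⟩

theorem tmul_eq_zero (H : Dehom γ ℒ ℬ u) (M : Type) [AddCommGroup M] [Module L M] (m : M)
    (h : (1 : B) ⊗ₜ[L] m = 0) : ∃ m' : M, m = ((u : L) - 1) • m' := by
  let T : M →ₗ[L] M := LinearMap.lsmul L M ((u : L) - 1)
  let Q := M ⧸ LinearMap.range T
  let q : M →ₗ[L] Q := (LinearMap.range T).mkQ
  let Φ : L →ₗ[L] (M →ₗ[L] Q) := LinearMap.toSpanSingleton L _ q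
  let al : L →ₗ[L] B := Algebra.linearMap L B
  have hk : LinearMap.ker al ≤ LinearMap.ker Φ := by
    intro a ha
    obtain ⟨c, rfl⟩ := H.ker a ha
    rw [LinearMap.mem_ker]
    ext x
    change (((u : L) - 1) * c) • q x = 0
    rw [← map_smul]
    refine (Submodule.Quotient.mk_eq_zero _).mpr ⟨c • x, ?_⟩
    change ((u : L) - 1) • c • x = _
    rw [smul_smul]
  let e := al.quotKerEquivOfSurjective H.surj
  let Ψ : B →ₗ[L] (M →ₗ[L] Q) := (Submodule.liftQ _ Φ hk) ∘ₗ e.symm.toLinearMap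
  have h1 : Ψ 1 = q := by
    have : e.symm 1 = Submodule.Quotient.mk 1 := by
      rw [LinearEquiv.symm_apply_eq]
      exact (map_one (algebraMap L B)).symm
    change Submodule.liftQ _ Φ hk (e.symm 1) = q
    rw [this]
    change Φ 1 = q
    simp [Φ]
  have h2 := congrArg (TensorProduct.lift Ψ) h
  rw [TensorProduct.lift.tmul, h1, map_zero] at h2
  obtain ⟨m', hm'⟩ := (Submodule.Quotient.mk_eq_zero _).mp h2
  exact ⟨m', hm'.symm⟩

theorem phi_zpow (H : Dehom γ ℒ ℬ u) (n : ℤ) : algebraMap L B ((u ^ n : Lˣ) : L) = 1 := by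
  have : Units.map (algebraMap L B : L →* B) u = 1 := Units.ext H.u1
  have h := congrArg Units.val (map_zpow (Units.map (algebraMap L B : L →* B)) u n)
  rw [this, one_zpow] at h
  exact h

/-- Existence of the homogenization coefficients. -/
theorem exists_coef (H : Dehom γ ℒ ℬ u) : ∃ c : Γ → Γ → L, (∀ δ, c δ δ = 1) ∧
    (∀ δ ε, c δ (γ + ε) * u = c δ ε) ∧
    (∀ δ ε, (QuotientAddGroup.mk ε : Γ ⧸ AddSubgroup.zmultiples γ) ≠ QuotientAddGroup.mk δ →
      c δ ε = 0) ∧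
    (∀ δ ε, (QuotientAddGroup.mk ε : Γ ⧸ AddSubgroup.zmultiples γ) = QuotientAddGroup.mk δ →
      algebraMap L B (c δ ε) = 1) ∧
    (∀ δ ε, c δ ε ∈ ℒ (δ - ε)) := by
  classical
  have hinj : ∀ m n : ℤ, m • γ = n • γ → m = n := by
    intro m n h
    have := H.inj (m - n) (by rw [sub_smul, h, sub_self])
    omega
  let c : Γ → Γ → L := fun δ ε =>
    if h : ∃ n : ℤ, n • γ = δ - ε then ((u ^ h.choose : Lˣ) : L) else 0
  have hc : ∀ δ ε (n : ℤ), n • γ = δ - ε → c δ ε = ((u ^ n : Lˣ) : L) := by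
    intro δ ε n hn
    have h : ∃ n : ℤ, n • γ = δ - ε := ⟨n, hn⟩
    have : h.choose = n := hinj _ _ (h.choose_spec.trans hn.symm)
    simp only [c, dif_pos h, this]
  have hmk : ∀ δ ε, (QuotientAddGroup.mk ε : Γ ⧸ AddSubgroup.zmultiples γ)
      = QuotientAddGroup.mk δ ↔ ∃ n : ℤ, n • γ = δ - ε := by
    intro δ ε
    rw [QuotientAddGroup.eq, AddSubgroup.mem_zmultiples_iff, neg_add_eq_sub]
  refine ⟨c, ?_, ?_, ?_, ?_, ?_⟩
  · intro δ
    rw [hc δ δ 0 (by simp)]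
    simp
  · intro δ ε
    by_cases h : ∃ n : ℤ, n • γ = δ - ε
    · obtain ⟨n, hn⟩ := h
      rw [hc δ ε n hn, hc δ (γ + ε) (n - 1) (by rw [sub_smul, hn, one_smul]; abel),
        ← Units.val_mul, ← zpow_add_one, sub_add_cancel]
    · have h' : ¬ ∃ n : ℤ, n • γ = δ - (γ + ε) := by
        rintro ⟨n, hn⟩
        exact h ⟨n + 1, by rw [add_smul, hn, one_smul]; abel⟩
      simp only [c, dif_neg h, dif_neg h', zero_mul]
  · intro δ ε h
    rw [Ne, hmk] at h
    simp only [c, dif_neg h]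
  · intro δ ε h
    obtain ⟨n, hn⟩ := (hmk _ _).mp h
    rw [hc δ ε n hn, H.phi_zpow]
  · intro δ ε
    by_cases h : ∃ n : ℤ, n • γ = δ - ε
    · obtain ⟨n, hn⟩ := h
      rw [hc δ ε n hn, ← hn]
      exact H.hu n
    · simp only [c, dif_neg h]
      exact zero_mem _

/-- The homogenization map. -/
theorem exists_proj (H : Dehom γ ℒ ℬ u) (M : GradedMod k L Γ ℒ) (δ : Γ) :
    ∃ P : B ⊗[L] M.carrier →+ M.carrier,
      (∀ m ∈ M.grading δ, P ((1 : B) ⊗ₜ[L] m) = m) ∧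
      (∀ ε, (QuotientAddGroup.mk ε : Γ ⧸ AddSubgroup.zmultiples γ) ≠ QuotientAddGroup.mk δ →
        ∀ m ∈ M.grading ε, P ((1 : B) ⊗ₜ[L] m) = 0) := by
  obtain ⟨c, c1, c2, c3, c4, c5⟩ := H.exists_coef
  obtain ⟨p, hp⟩ := dehom_exists_ext M.internal
    (fun ε => (LinearMap.restrictScalars k (LinearMap.lsmul L M.carrier (c δ ε))) ∘ₗ
      (M.grading ε).subtype)
  have hp' : ∀ ε, ∀ m ∈ M.grading ε, p m = c δ ε • m := fun ε m hm => hp ε ⟨m, hm⟩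
  have hu1 : (u : L) ∈ ℒ γ := by simpa using H.hu 1
  have hpu : ∀ m, p ((u : L) • m) = p m := by
    intro m
    induction dehom_internal_top M.internal m using Submodule.iSup_induction' with
    | mem ε m hm =>
      rw [hp' _ _ (M.smul_mem γ ε _ hu1 m hm), hp' _ _ hm, smul_smul, c2]
    | zero => simp
    | add x y _ _ hx hy => simp [hx, hy]
  have hp0 : ∀ m, (1 : B) ⊗ₜ[L] m = 0 → p m = 0 := by
    intro m hm
    obtain ⟨m', rfl⟩ := H.tmul_eq_zero _ m hm
    rw [sub_smul, one_smul, map_sub, hpu, sub_self]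
  choose s hs using H.exists_tmul M.carrier
  have hps : ∀ m, p (s ((1 : B) ⊗ₜ[L] m)) = p m := by
    intro m
    rw [← sub_eq_zero, ← map_sub]
    apply hp0
    rw [TensorProduct.tmul_sub, ← hs, sub_self]
  refine ⟨⟨⟨fun z => p (s z), ?_⟩, ?_⟩, ?_, ?_⟩
  · have := hps 0
    simpa using this
  · intro x y
    rw [hs x, hs y, ← TensorProduct.tmul_add]
    simp only [hps, map_add]
  · intro m hm
    change p (s _) = m
    rw [hps, hp' _ _ hm, c1, one_smul]
  · intro ε hε m hm
    change p (s _) = 0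
    rw [hps, hp' _ _ hm, c3 _ _ hε, zero_smul]

theorem tmul_inj (H : Dehom γ ℒ ℬ u) (M : GradedMod k L Γ ℒ) (δ : Γ) (m : M.carrier) (hm : m ∈ M.grading δ)
    (h : (1 : B) ⊗ₜ[L] m = 0) : m = 0 := by
  obtain ⟨P, hP, -⟩ := H.exists_proj M δ
  rw [← hP m hm, h, map_zero]

theorem mem_gr (H : Dehom γ ℒ ℬ u) (M : GradedMod k L Γ ℒ) (δ : Γ) (z : B ⊗[L] M.carrier)
    (hz : z ∈ dehomGr γ B M (QuotientAddGroup.mk δ)) :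
    ∃ m ∈ M.grading δ, z = (1 : B) ⊗ₜ[L] m := by
  obtain ⟨c, c1, c2, c3, c4, c5⟩ := H.exists_coef
  induction hz using Submodule.span_induction with
  | mem z hz =>
    obtain ⟨ε, hε, m, hm, rfl⟩ := hz
    refine ⟨c δ ε • m, ?_, ?_⟩
    · have := M.smul_mem _ _ _ (c5 δ ε) m hm
      rwa [sub_add_cancel] at this
    · rw [H.tmul_smul, c4 _ _ hε, one_smul]
  | zero => exact ⟨0, zero_mem _, by simp⟩
  | add x y _ _ hx hy =>
    obtain ⟨m, hm, rfl⟩ := hx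
    obtain ⟨m', hm', rfl⟩ := hy
    exact ⟨m + m', add_mem hm hm', by rw [TensorProduct.tmul_add]⟩
  | smul c x _ hx =>
    obtain ⟨m, hm, rfl⟩ := hx
    exact ⟨c • m, Submodule.smul_mem _ _ hm, by rw [H.ksmul]⟩

theorem tmul_mem_gr (M : GradedMod k L Γ ℒ) (δ : Γ) (m : M.carrier) (hm : m ∈ M.grading δ) :
    (1 : B) ⊗ₜ[L] m ∈ dehomGr γ B M (QuotientAddGroup.mk δ) :=
  Submodule.subset_span ⟨δ, rfl, m, hm, rfl⟩

theorem internal (H : Dehom γ ℒ ℬ u) [DecidableEq (Γ ⧸ AddSubgroup.zmultiples γ)] (M : GradedMod k L Γ ℒ) :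
    DirectSum.IsInternal (dehomGr γ B M) := by
  have hr : ∀ d : Γ ⧸ AddSubgroup.zmultiples γ, QuotientAddGroup.mk d.out = d :=
    fun d => Quotient.out_eq' d
  choose P hP1 hP2 using H.exists_proj M
  refine dehom_internal_of_proj _ (fun _ => M.carrier) (fun d => P d.out) ?_ ?_ ?_
  · intro d z hz h
    rw [← hr d] at hz
    obtain ⟨m, hm, rfl⟩ := H.mem_gr M _ z hz
    rw [hP1 _ _ hm] at h
    rw [h, TensorProduct.tmul_zero]
  · intro d e hde z hz
    rw [← hr e] at hz
    obtain ⟨m, hm, rfl⟩ := H.mem_gr M _ z hz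
    refine hP2 _ _ ?_ m hm
    rw [hr, hr]
    exact hde.symm
  · intro z
    obtain ⟨m, rfl⟩ := H.exists_tmul _ z
    induction dehom_internal_top M.internal m using Submodule.iSup_induction' with
    | mem ε m hm => exact Submodule.mem_iSup_of_mem _ (tmul_mem_gr M ε m hm)
    | zero => simp
    | add x y _ _ hx hy =>
      rw [TensorProduct.tmul_add]
      exact add_mem hx hy

theorem gr_smul (H : Dehom γ ℒ ℬ u) (M : GradedMod k L Γ ℒ) (d e : Γ ⧸ AddSubgroup.zmultiples γ) (b : B)
    (hb : b ∈ ℬ d) (z : B ⊗[L] M.carrier) (hz : z ∈ dehomGr γ B M e) :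
    b • z ∈ dehomGr γ B M (d + e) := by
  induction e using QuotientAddGroup.induction_on with
  | H ε =>
  obtain ⟨m, hm, rfl⟩ := H.mem_gr M _ z hz
  have hb' := H.bar d b hb
  clear hb
  induction hb' using Submodule.span_induction with
  | mem b hb =>
    obtain ⟨α, rfl, a, ha, rfl⟩ := hb
    rw [← H.tmul_smul]
    exact tmul_mem_gr M (α + ε) _ (M.smul_mem _ _ _ ha _ hm)
  | zero => simp
  | add x y _ _ hx hy =>
    rw [add_smul]
    exact add_mem hx hy
  | smul c x _ hx =>
    rw [smul_assoc]
    exact Submodule.smul_mem _ _ hx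

theorem faithful (H : Dehom γ ℒ ℬ u) (M M' : GradedMod k L Γ ℒ) (f f' : M.carrier →ₗ[L] M'.carrier)
    (hf : ∀ δ, ∀ m ∈ M.grading δ, f m ∈ M'.grading δ)
    (hf' : ∀ δ, ∀ m ∈ M.grading δ, f' m ∈ M'.grading δ)
    (h : LinearMap.baseChange B f = LinearMap.baseChange B f') : f = f' := by
  ext m
  induction dehom_internal_top M.internal m using Submodule.iSup_induction' with
  | mem δ m hm =>
    rw [← sub_eq_zero]
    refine H.tmul_inj M' δ _ (sub_mem (hf _ _ hm) (hf' _ _ hm)) ?_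
    have := congrArg (fun g => g ((1 : B) ⊗ₜ[L] m)) h
    simp only [LinearMap.baseChange_tmul] at this
    rw [TensorProduct.tmul_sub, this, sub_self]
  | zero => simp
  | add x y _ _ hx hy => simp [hx, hy]

theorem full (H : Dehom γ ℒ ℬ u) (M M' : GradedMod k L Γ ℒ) (g : B ⊗[L] M.carrier →ₗ[B] B ⊗[L] M'.carrier)
    (hg : ∀ d, ∀ z ∈ dehomGr γ B M d, g z ∈ dehomGr γ B M' d) :
    ∃ f : M.carrier →ₗ[L] M'.carrier, (∀ δ, ∀ m ∈ M.grading δ, f m ∈ M'.grading δ) ∧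
      LinearMap.baseChange B f = g := by
  have h1 : ∀ δ (m : M.grading δ), ∃ m' ∈ M'.grading δ,
      g ((1 : B) ⊗ₜ[L] (m : M.carrier)) = (1 : B) ⊗ₜ[L] m' := fun δ m =>
    H.mem_gr M' δ _ (hg _ _ (tmul_mem_gr M δ m m.2))
  choose F hF1 hF2 using h1
  have huniq : ∀ δ (x y : M'.carrier), x ∈ M'.grading δ → y ∈ M'.grading δ →
      (1 : B) ⊗ₜ[L] x = (1 : B) ⊗ₜ[L] y → x = y := by
    intro δ x y hx hy h
    rw [← sub_eq_zero]
    refine H.tmul_inj M' δ _ (sub_mem hx hy) ?_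
    rw [TensorProduct.tmul_sub, h, sub_self]
  obtain ⟨f, hf⟩ := dehom_exists_ext M.internal (V' := M'.carrier) (fun δ =>
    { toFun := F δ
      map_add' := fun x y => by
        refine huniq δ _ _ (hF1 _ _) (add_mem (hF1 _ _) (hF1 _ _)) ?_
        rw [TensorProduct.tmul_add, ← hF2, ← hF2, ← hF2, ← map_add, ← TensorProduct.tmul_add]
        rfl
      map_smul' := fun c x => by
        refine huniq δ _ _ (hF1 _ _) (Submodule.smul_mem _ _ (hF1 _ _)) ?_
        rw [RingHom.id_apply, H.ksmul, ← hF2, ← hF2, Submodule.coe_smul, H.ksmul]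
        exact LinearMap.map_smul_of_tower g c _ })
  have hf1 : ∀ δ, ∀ m ∈ M.grading δ, f m ∈ M'.grading δ := by
    intro δ m hm
    have := hF1 δ ⟨m, hm⟩
    have h2 := hf δ ⟨m, hm⟩
    simp only [LinearMap.coe_mk, AddHom.coe_mk] at h2
    rw [h2]
    exact this
  have hf2 : ∀ m, g ((1 : B) ⊗ₜ[L] m) = (1 : B) ⊗ₜ[L] (f m) := by
    intro m
    induction dehom_internal_top M.internal m using Submodule.iSup_induction' with
    | mem δ m hm =>
      have h2 := hf δ ⟨m, hm⟩
      simp only [LinearMap.coe_mk, AddHom.coe_mk] at h2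
      rw [h2]
      exact hF2 δ ⟨m, hm⟩
    | zero => simp
    | add x y _ _ hx hy => simp [TensorProduct.tmul_add, hx, hy]
  have hf3 : ∀ (a : L) (m : M.carrier), f (a • m) = a • f m := by
    intro a m
    induction H.span a using Submodule.iSup_induction' with
    | mem α a ha =>
      induction dehom_internal_top M.internal m using Submodule.iSup_induction' with
      | mem δ m hm =>
        refine huniq (α + δ) _ _ (hf1 _ _ (M.smul_mem _ _ _ ha _ hm))
          (M'.smul_mem _ _ _ ha _ (hf1 _ _ hm)) ?_
        rw [← hf2, H.tmul_smul, H.tmul_smul, map_smul, hf2]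
      | zero => simp
      | add x y _ _ hx hy => simp only [smul_add, map_add, hx, hy]
    | zero => simp
    | add x y _ _ hx hy => simp only [add_smul, map_add, hx, hy]
  refine ⟨⟨⟨f, map_add f⟩, hf3⟩, hf1, ?_⟩
  ext m
  simp [hf2]

end Dehom

/-! ### The inverse construction -/

/-- `⊕_δ N`, on which `L` acts through `ψ : L → B[Γ]`. -/
def TwMod (N : Type) [AddCommGroup N] [Module B N] (_ψ : L →ₐ[k] AddMonoidAlgebra B Γ) : Type :=
  Γ →₀ N

section Tw

variable (N : Type) [AddCommGroup N] [Module B N] [Module k N] [IsScalarTower k B N]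
  (ψ : L →ₐ[k] AddMonoidAlgebra B Γ)

/-- The underlying finitely supported function. -/
def TwMod.val {N : Type} [AddCommGroup N] [Module B N] {ψ : L →ₐ[k] AddMonoidAlgebra B Γ}
    (x : TwMod N ψ) : Γ →₀ N := x

instance : AddCommGroup (TwMod N ψ) := inferInstanceAs (AddCommGroup (Γ →₀ N))

instance : Module k (TwMod N ψ) := inferInstanceAs (Module k (Γ →₀ N))

/-- Translations. -/
def twTrans (B Γ N : Type) [CommRing B] [AddCommGroup Γ] [AddCommGroup N] [Module B N] :
    Multiplicative Γ →* Module.End B (Γ →₀ N) where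
  toFun α := Finsupp.lmapDomain N B (fun δ => α.toAdd + δ)
  map_one' := by
    ext x : 2
    simp
  map_mul' α β := by
    ext x : 2
    simp [add_assoc]

/-- The action of the group ring. -/
def twAct (B Γ N : Type) [CommRing B] [AddCommGroup Γ] [AddCommGroup N] [Module B N] :
    AddMonoidAlgebra B Γ →ₐ[B] Module.End B (Γ →₀ N) :=
  AddMonoidAlgebra.lift B (Module.End B (Γ →₀ N)) Γ (twTrans B Γ N)

theorem twAct_single (α : Γ) (b : B) (δ : Γ) (n : N) :
    twAct B Γ N (AddMonoidAlgebra.single α b) (Finsupp.single δ n)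
      = Finsupp.single (α + δ) (b • n) := by
  simp [twAct, twTrans, AddMonoidAlgebra.lift_single]

instance : Module L (TwMod N ψ) :=
  Module.compHom (Γ →₀ N) ((twAct B Γ N : AddMonoidAlgebra B Γ →+* Module.End B (Γ →₀ N)).comp
    (ψ : L →+* AddMonoidAlgebra B Γ))

theorem tw_smul_def (a : L) (x : TwMod N ψ) : a • x = (twAct B Γ N (ψ a) x : Γ →₀ N) := rfl

theorem twAct_smul (c : k) (a : L) (x : Γ →₀ N) :
    twAct B Γ N (ψ (c • a)) x = c • twAct B Γ N (ψ a) x := by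
  rw [map_smul, ← algebraMap_smul B c (ψ a), map_smul, LinearMap.smul_apply, algebraMap_smul]

instance : IsScalarTower k L (TwMod N ψ) := ⟨fun c a x => twAct_smul N ψ c a x⟩

end Tw

section Inverse

variable [DecidableEq (Γ ⧸ AddSubgroup.zmultiples γ)]
  (N : GradedMod k B (Γ ⧸ AddSubgroup.zmultiples γ) ℬ)
  (ψ : L →ₐ[k] AddMonoidAlgebra B Γ)

/-- The elements of `⊕_δ N` whose `δ`-coordinate lies in the `δ̄`-component of `N`. -/
def TwMem (x : Γ →₀ N.carrier) : Prop := ∀ δ, x δ ∈ N.grading (QuotientAddGroup.mk δ)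

theorem TwMem.sum {s : Finset Γ} {f : Γ → Γ →₀ N.carrier} (h : ∀ i ∈ s, TwMem N (f i)) :
    TwMem N (∑ i ∈ s, f i) := by
  intro δ
  rw [Finsupp.finsetSum_apply]
  exact sum_mem fun i hi => h i hi δ

theorem TwMem.single {δ : Γ} {n : N.carrier} (h : n ∈ N.grading (QuotientAddGroup.mk δ)) :
    TwMem N (Finsupp.single δ n) := by
  intro ε
  by_cases hε : δ = ε
  · subst hε
    simpa using h
  · simp [hε]

theorem twAct_mem (H : Dehom γ ℒ ℬ u)
    (hψ : ∀ α, ∀ a ∈ ℒ α, ψ a = AddMonoidAlgebra.single α (algebraMap L B a))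
    (a : L) (x : Γ →₀ N.carrier) (hx : TwMem N x) : TwMem N (twAct B Γ N.carrier (ψ a) x) := by
  induction H.span a using Submodule.iSup_induction' with
  | mem α a ha =>
    rw [← Finsupp.sum_single x, Finsupp.sum, map_sum]
    refine TwMem.sum N fun δ _ => ?_
    rw [hψ α a ha, twAct_single]
    exact TwMem.single N (N.smul_mem _ _ _ (H.bar' α a ha) _ (hx δ))
  | zero =>
    intro δ
    simp
  | add y z _ _ hy hz =>
    intro δ
    rw [map_add, map_add, LinearMap.add_apply, Finsupp.add_apply]
    exact add_mem (hy δ) (hz δ)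

/-- Sum of the coordinates. -/
def twSum (B Γ N : Type) [CommRing B] [AddCommGroup N] [Module B N] : (Γ →₀ N) →ₗ[B] N :=
  Finsupp.lsum B (fun _ => LinearMap.id)

theorem twSum_single (δ : Γ) (n : N.carrier) :
    twSum B Γ N.carrier (Finsupp.single δ n) = n := by
  simp [twSum]

theorem twSum_act (H : Dehom γ ℒ ℬ u)
    (hψ : ∀ α, ∀ a ∈ ℒ α, ψ a = AddMonoidAlgebra.single α (algebraMap L B a))
    (a : L) (x : Γ →₀ N.carrier) :
    twSum B Γ N.carrier (twAct B Γ N.carrier (ψ a) x)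
      = algebraMap L B a • twSum B Γ N.carrier x := by
  induction H.span a using Submodule.iSup_induction' with
  | mem α a ha =>
    rw [hψ α a ha]
    induction x using Finsupp.induction_linear with
    | zero => simp
    | add x y hx hy => simp only [map_add, smul_add, hx, hy]
    | single δ n => rw [twAct_single, twSum_single, twSum_single]
  | zero => simp
  | add y z _ _ hy hz => simp only [map_add, add_smul, LinearMap.add_apply, hy, hz]

/-- The submodule underlying the inverse construction. -/
def twSub (H : Dehom γ ℒ ℬ u)
    (hψ : ∀ α, ∀ a ∈ ℒ α, ψ a = AddMonoidAlgebra.single α (algebraMap L B a)) :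
    Submodule L (TwMod N.carrier ψ) where
  carrier := {x | TwMem N x}
  add_mem' := fun hx hy δ => add_mem (hx δ) (hy δ)
  zero_mem' := fun δ => zero_mem (N.grading (QuotientAddGroup.mk δ))
  smul_mem' := fun a x hx => twAct_mem N ψ H hψ a x hx

/-- The coordinates. -/
def twCoord (H : Dehom γ ℒ ℬ u)
    (hψ : ∀ α, ∀ a ∈ ℒ α, ψ a = AddMonoidAlgebra.single α (algebraMap L B a)) (δ : Γ) :
    twSub N ψ H hψ →ₗ[k] N.carrier where
  toFun x := x.1.val δ
  map_add' _ _ := rfl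
  map_smul' _ _ := rfl

/-- The homogeneous elements. -/
def twSingle (H : Dehom γ ℒ ℬ u)
    (hψ : ∀ α, ∀ a ∈ ℒ α, ψ a = AddMonoidAlgebra.single α (algebraMap L B a)) (δ : Γ)
    (n : N.carrier) (hn : n ∈ N.grading (QuotientAddGroup.mk δ)) : twSub N ψ H hψ :=
  ⟨(Finsupp.single δ n : Γ →₀ N.carrier), TwMem.single N hn⟩

/-- The inverse construction. -/
def twGraded (H : Dehom γ ℒ ℬ u)
    (hψ : ∀ α, ∀ a ∈ ℒ α, ψ a = AddMonoidAlgebra.single α (algebraMap L B a)) :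
    GradedMod k L Γ ℒ where
  carrier := twSub N ψ H hψ
  grading δ := ⨅ ε, ⨅ (_ : ε ≠ δ), LinearMap.ker (twCoord N ψ H hψ ε)
  internal := by
    refine dehom_internal_of_proj _ (fun _ => N.carrier)
      (fun δ => (twCoord N ψ H hψ δ).toAddMonoidHom) ?_ ?_ ?_
    · intro δ x hx h
      simp only [Submodule.mem_iInf, LinearMap.mem_ker] at hx
      apply Subtype.ext
      refine Finsupp.ext (f := x.1.val) (g := (0 : Γ →₀ N.carrier)) fun ε => ?_
      by_cases hε : ε = δ
      · subst hε
        exact h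
      · exact hx ε hε
    · intro δ ε hne x hx
      simp only [Submodule.mem_iInf, LinearMap.mem_ker] at hx
      exact hx δ hne
    · intro x
      have hx : x = ∑ δ ∈ x.1.val.support,
          twSingle N ψ H hψ δ (x.1.val δ) (x.2 δ) := by
        apply Subtype.ext
        rw [AddSubmonoidClass.coe_finsetSum]
        exact (Finsupp.sum_single x.1.val).symm
      rw [hx]
      refine sum_mem fun δ _ => Submodule.mem_iSup_of_mem δ ?_
      simp only [Submodule.mem_iInf, LinearMap.mem_ker]
      intro ε hε
      exact Finsupp.single_eq_of_ne (M := N.carrier) hε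
  smul_mem := by
    intro α δ a ha x hx
    simp only [Submodule.mem_iInf, LinearMap.mem_ker] at hx ⊢
    have hx' : x.1.val = Finsupp.single δ (x.1.val δ) := by
      ext ε
      by_cases hε : ε = δ
      · subst hε
        simp
      · rw [Finsupp.single_eq_of_ne hε]
        exact hx ε hε
    intro ε hε
    change (twAct B Γ N.carrier (ψ a) x.1.val) ε = 0
    rw [hx', hψ α a ha, twAct_single]
    exact Finsupp.single_eq_of_ne (M := N.carrier) hε

theorem twGraded_eq_single (H : Dehom γ ℒ ℬ u)
    (hψ : ∀ α, ∀ a ∈ ℒ α, ψ a = AddMonoidAlgebra.single α (algebraMap L B a)) (δ : Γ)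
    (x : twSub N ψ H hψ) (hx : x ∈ (twGraded N ψ H hψ).grading δ) :
    ∃ n, ∃ hn : n ∈ N.grading (QuotientAddGroup.mk δ), x = twSingle N ψ H hψ δ n hn := by
  refine ⟨x.1.val δ, x.2 δ, Subtype.ext ?_⟩
  change x ∈ ⨅ ε, ⨅ (_ : ε ≠ δ), LinearMap.ker (twCoord N ψ H hψ ε) at hx
  simp only [Submodule.mem_iInf, LinearMap.mem_ker] at hx
  change x.1.val = Finsupp.single δ (x.1.val δ)
  ext ε
  by_cases hε : ε = δ
  · subst hε
    simp
  · rw [Finsupp.single_eq_of_ne hε]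
    exact hx ε hε

/-- The homogeneous elements of the inverse construction. -/
def twHom (H : Dehom γ ℒ ℬ u)
    (hψ : ∀ α, ∀ a ∈ ℒ α, ψ a = AddMonoidAlgebra.single α (algebraMap L B a)) (δ : Γ)
    (n : N.carrier) (hn : n ∈ N.grading (QuotientAddGroup.mk δ)) :
    (twGraded N ψ H hψ).carrier :=
  twSingle N ψ H hψ δ n hn

theorem twHom_mem (H : Dehom γ ℒ ℬ u)
    (hψ : ∀ α, ∀ a ∈ ℒ α, ψ a = AddMonoidAlgebra.single α (algebraMap L B a)) (δ : Γ)
    (n : N.carrier) (hn : n ∈ N.grading (QuotientAddGroup.mk δ)) :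
    twHom N ψ H hψ δ n hn ∈ (twGraded N ψ H hψ).grading δ := by
  change twSingle N ψ H hψ δ n hn ∈ ⨅ ε, ⨅ (_ : ε ≠ δ), LinearMap.ker (twCoord N ψ H hψ ε)
  simp only [Submodule.mem_iInf, LinearMap.mem_ker]
  intro ε hε
  exact Finsupp.single_eq_of_ne (M := N.carrier) hε

theorem twHom_zero (H : Dehom γ ℒ ℬ u)
    (hψ : ∀ α, ∀ a ∈ ℒ α, ψ a = AddMonoidAlgebra.single α (algebraMap L B a)) (δ : Γ)
    (hn : (0 : N.carrier) ∈ N.grading (QuotientAddGroup.mk δ)) :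
    twHom N ψ H hψ δ 0 hn = 0 :=
  Subtype.ext (Finsupp.single_zero δ)

theorem Dehom.essSurj (H : Dehom γ ℒ ℬ u)
    (hψ : ∀ α, ∀ a ∈ ℒ α, ψ a = AddMonoidAlgebra.single α (algebraMap L B a)) :
    ∃ M : GradedMod k L Γ ℒ, ∃ e : B ⊗[L] M.carrier ≃ₗ[B] N.carrier,
      ∀ d, (dehomGr γ B M d).map
        ((e : B ⊗[L] M.carrier →ₗ[B] N.carrier).restrictScalars k) = N.grading d := by
  let M := twGraded N ψ H hψ
  let _ : Module L N.carrier := Module.compHom N.carrier (algebraMap L B)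
  have : IsScalarTower L B N.carrier := ⟨fun a b n => by
    rw [Algebra.smul_def, mul_smul]
    rfl⟩
  let σ : M.carrier →ₗ[L] N.carrier :=
    { toFun := fun x => twSum B Γ N.carrier x.1
      map_add' := fun x y => map_add (twSum B Γ N.carrier) x.1 y.1
      map_smul' := fun a x => twSum_act N ψ H hψ a x.1 }
  let e : B ⊗[L] M.carrier →ₗ[B] N.carrier := LinearMap.liftBaseChange B σ
  have he : ∀ δ n hn, e ((1 : B) ⊗ₜ[L] twHom N ψ H hψ δ n hn) = n := by
    intro δ n hn
    refine (LinearMap.liftBaseChange_tmul (A := B) σ 1 _).trans ?_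
    rw [one_smul]
    exact twSum_single N δ n
  have hgr : ∀ δ, ∀ z ∈ dehomGr γ B M (QuotientAddGroup.mk δ),
      ∃ n, ∃ hn : n ∈ N.grading (QuotientAddGroup.mk δ),
        z = (1 : B) ⊗ₜ[L] twHom N ψ H hψ δ n hn := by
    intro δ z hz
    obtain ⟨m, hm, rfl⟩ := H.mem_gr M δ z hz
    obtain ⟨n, hn, h⟩ := twGraded_eq_single N ψ H hψ δ m hm
    exact ⟨n, hn, congrArg (fun m : M.carrier => (1 : B) ⊗ₜ[L] m) h⟩
  have hmaps : ∀ d, ∀ z ∈ dehomGr γ B M d, e z ∈ N.grading d := by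
    intro d z hz
    induction d using QuotientAddGroup.induction_on with
    | H δ =>
    obtain ⟨n, hn, rfl⟩ := hgr δ z hz
    rw [he]
    exact hn
  have hsurj : ∀ d, ∀ n ∈ N.grading d, ∃ z ∈ dehomGr γ B M d, e z = n := by
    intro d n hn
    induction d using QuotientAddGroup.induction_on with
    | H δ =>
    exact ⟨_, Dehom.tmul_mem_gr M δ _ (twHom_mem N ψ H hψ δ n hn), he δ n hn⟩
  have hinj : Function.Injective e := by
    refine dehom_injective _ _ (H.internal M) N.internal (e.restrictScalars k) hmaps ?_
    intro d z hz h
    induction d using QuotientAddGroup.induction_on with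
    | H δ =>
    obtain ⟨n, hn, rfl⟩ := hgr δ z hz
    have h' : n = 0 := (he δ n hn).symm.trans h
    subst h'
    rw [twHom_zero]
    exact TensorProduct.tmul_zero _ _
  have hsurj' : Function.Surjective e := by
    intro n
    induction dehom_internal_top N.internal n using Submodule.iSup_induction' with
    | mem d n hn =>
      obtain ⟨z, -, hz⟩ := hsurj d n hn
      exact ⟨z, hz⟩
    | zero => exact ⟨0, map_zero e⟩
    | add x y _ _ hx hy =>
      obtain ⟨z, rfl⟩ := hx
      obtain ⟨w, rfl⟩ := hy
      exact ⟨z + w, map_add e z w⟩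
  refine ⟨M, LinearEquiv.ofBijective e ⟨hinj, hsurj'⟩, fun d => le_antisymm ?_ ?_⟩
  · rintro _ ⟨z, hz, rfl⟩
    exact hmaps d z hz
  · intro n hn
    obtain ⟨z, hz, h⟩ := hsurj d n hn
    exact ⟨z, hz, h⟩

end Inverse

end DehomAux

section Statement17

variable (k : Type) [Field k] [IsAlgClosed k] [CharZero k]
variable (Γ : Type) [AddCommGroup Γ] [DecidableEq Γ]
variable (R : Type) [CommRing R] [Algebra k R]
variable (𝒜 : Γ → Submodule k R) [GradedAlgebra 𝒜]
variable (γ : Γ) (t : R)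
variable [DecidableEq (Γ ⧸ AddSubgroup.zmultiples γ)]

/-- The degree-`δ` component of the `Γ`-grading of the localization `R[t⁻¹]`:
spanned by the fractions `r / tᵐ` with `r ∈ 𝒜 (δ + m γ)`. -/
def locGrading (δ : Γ) : Submodule k (Localization.Away t) :=
  Submodule.span k {x | ∃ (m : ℕ) (r : R), r ∈ 𝒜 (δ + m • γ) ∧
    x = Localization.mk r ⟨t ^ m, (Submonoid.mem_powers_iff _ _).mpr ⟨m, rfl⟩⟩}

/-- `R̄ = R/(t−1)`. -/
abbrev BarRing : Type := R ⧸ Ideal.span {t - 1}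

/-- The degree-`δ̄` component of the `Γ̄ = Γ/ℤγ`-grading of `R/(t−1)`: the image of the
sum of the components `𝒜 ε` over `ε ∈ δ̄`. -/
def barGrading (d : Γ ⧸ AddSubgroup.zmultiples γ) : Submodule k (BarRing R t) :=
  Submodule.span k {x | ∃ ε : Γ,
    (QuotientAddGroup.mk ε : Γ ⧸ AddSubgroup.zmultiples γ) = d ∧
    ∃ r ∈ 𝒜 ε, x = Ideal.Quotient.mk (Ideal.span {t - 1}) r}

/-- `R/(t−1)` is an `R[t⁻¹]`-algebra via the natural surjection
`φ : R[t⁻¹] → R/(t−1)` (the image of `t` in `R/(t−1)` is `1`, hence invertible). -/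
instance barAlgebra : Algebra (Localization.Away t) (BarRing R t) :=
  (Localization.awayLift (Ideal.Quotient.mk (Ideal.span {t - 1})) t
    (by
      have h1 : Ideal.Quotient.mk (Ideal.span {t - 1}) t
          = Ideal.Quotient.mk (Ideal.span {t - 1}) 1 :=
        Ideal.Quotient.eq.mpr (Ideal.subset_span rfl)
      rw [h1, map_one]
      exact isUnit_one)).toAlgebra

instance barSMulCommClass : SMulCommClass (Localization.Away t) k (BarRing R t) :=
  ⟨fun a b c => by
    simp only [Algebra.smul_def]
    ring⟩

/-- The underlying module of the image of a graded `R[t⁻¹]`-module `M` under the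
functor: `R/(t−1) ⊗_{R[t⁻¹]} M`. -/
abbrev FCarrier (M : GradedMod k (Localization.Away t) Γ (locGrading k Γ R 𝒜 γ t)) :
    Type :=
  BarRing R t ⊗[Localization.Away t] M.carrier

/-- The `δ̄`-component of the image of a graded module under the functor: the image of
the sum of the components `M_ε`, `ε ∈ δ̄`, under `m ↦ 1 ⊗ m`. -/
def FGrading (M : GradedMod k (Localization.Away t) Γ (locGrading k Γ R 𝒜 γ t))
    (d : Γ ⧸ AddSubgroup.zmultiples γ) : Submodule k (FCarrier k Γ R 𝒜 γ t M) :=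
  Submodule.span k {z | ∃ ε : Γ,
    (QuotientAddGroup.mk ε : Γ ⧸ AddSubgroup.zmultiples γ) = d ∧
    ∃ m ∈ M.grading ε,
      z = (1 : BarRing R t) ⊗ₜ[Localization.Away t] m}

/-- The action of the functor `R/(t−1) ⊗_{R[t⁻¹]} (−)` on degree-preserving
homomorphisms. -/
def inducedMap (M M' : GradedMod k (Localization.Away t) Γ (locGrading k Γ R 𝒜 γ t))
    (f : GradedHom M M') :
    {g : FCarrier k Γ R 𝒜 γ t M →ₗ[BarRing R t] FCarrier k Γ R 𝒜 γ t M' //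
      ∀ d, (FGrading k Γ R 𝒜 γ t M d).map (g.restrictScalars k)
        ≤ FGrading k Γ R 𝒜 γ t M' d} :=
  ⟨LinearMap.baseChange (BarRing R t) f.1, by
    intro d
    rw [FGrading, Submodule.map_span]
    refine Submodule.span_le.mpr ?_
    rintro z ⟨w, ⟨ε, hε, m, hm, rfl⟩, rfl⟩
    refine Submodule.subset_span ⟨ε, hε, f.1 m, ?_, ?_⟩
    · exact f.2 ε (Submodule.mem_map.mpr ⟨m, hm, rfl⟩)
    · exact (LinearMap.baseChange_tmul f.1 1 m).symm⟩

theorem dehom_bar_t : Ideal.Quotient.mk (Ideal.span {t - 1}) t = 1 := by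
  rw [← map_one (Ideal.Quotient.mk (Ideal.span {t - 1}))]
  exact Ideal.Quotient.eq.mpr (Ideal.subset_span rfl)

theorem dehom_algebraMap (r : R) :
    algebraMap (Localization.Away t) (BarRing R t) (algebraMap R (Localization.Away t) r)
      = Ideal.Quotient.mk (Ideal.span {t - 1}) r :=
  IsLocalization.Away.lift_eq t (by rw [dehom_bar_t]; exact isUnit_one) r

theorem dehom_mk_mul (r : R) (m : ℕ) (h : t ^ m ∈ Submonoid.powers t) :
    Localization.mk r ⟨t ^ m, h⟩ * algebraMap R (Localization.Away t) t ^ m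
      = algebraMap R (Localization.Away t) r := by
  rw [← map_pow, Localization.mk_eq_mk']
  exact IsLocalization.mk'_spec (Localization.Away t) r ⟨t ^ m, h⟩

theorem dehom_algebraMap_mk (r : R) (m : ℕ) (h : t ^ m ∈ Submonoid.powers t) :
    algebraMap (Localization.Away t) (BarRing R t) (Localization.mk r ⟨t ^ m, h⟩)
      = Ideal.Quotient.mk (Ideal.span {t - 1}) r := by
  have := congrArg (algebraMap (Localization.Away t) (BarRing R t)) (dehom_mk_mul R t r m h)
  rwa [map_mul, map_pow, dehom_algebraMap, dehom_algebraMap, dehom_bar_t, one_pow,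
    mul_one] at this

instance dehomTower : IsScalarTower k (Localization.Away t) (BarRing R t) :=
  IsScalarTower.of_algebraMap_eq fun c => by
    rw [IsScalarTower.algebraMap_apply k R (Localization.Away t), dehom_algebraMap]
    rfl

theorem dehom_algebraMap_smul (c : k) (x : Localization.Away t) :
    algebraMap (Localization.Away t) (BarRing R t) (c • x)
      = c • algebraMap (Localization.Away t) (BarRing R t) x :=
  (IsScalarTower.toAlgHom k (Localization.Away t) (BarRing R t)).map_smul_of_tower c x

/-- `t` as a unit of `R[t⁻¹]`. -/
def dehomUnit : (Localization.Away t)ˣ :=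
  (IsLocalization.Away.algebraMap_isUnit (S := Localization.Away t) t).unit

theorem dehomUnit_val : (dehomUnit R t : Localization.Away t)
    = algebraMap R (Localization.Away t) t := rfl

theorem dehom_exists_mk (a : Localization.Away t) : ∃ (r : R) (m : ℕ),
    a = Localization.mk r ⟨t ^ m, (Submonoid.mem_powers_iff _ _).mpr ⟨m, rfl⟩⟩ := by
  induction a using Localization.induction_on with
  | H y =>
  obtain ⟨r, s, m, rfl⟩ := y
  exact ⟨r, m, rfl⟩

theorem dehom_mem_loc (δ : Γ) (m : ℕ) (r : R) (hr : r ∈ 𝒜 (δ + m • γ)) :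
    Localization.mk r ⟨t ^ m, (Submonoid.mem_powers_iff _ _).mpr ⟨m, rfl⟩⟩
      ∈ locGrading k Γ R 𝒜 γ t δ :=
  Submodule.subset_span ⟨m, r, hr, rfl⟩

theorem dehom_map_mem_loc (δ : Γ) (r : R) (hr : r ∈ 𝒜 δ) :
    algebraMap R (Localization.Away t) r ∈ locGrading k Γ R 𝒜 γ t δ := by
  have := dehom_mem_loc k Γ R 𝒜 γ t δ 0 r (by simpa using hr)
  have h2 := dehom_mk_mul R t r 0 ((Submonoid.mem_powers_iff _ _).mpr ⟨0, rfl⟩)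
  rw [pow_zero (algebraMap R (Localization.Away t) t), mul_one] at h2
  rw [← h2]
  exact this

theorem dehom_holds (ht : t ∈ 𝒜 γ) (hinj : ∀ n : ℤ, n • γ = 0 → n = 0) :
    Dehom γ (locGrading k Γ R 𝒜 γ t) (barGrading k Γ R 𝒜 γ t) (dehomUnit R t) where
  surj := by
    intro b
    obtain ⟨r, rfl⟩ := Ideal.Quotient.mk_surjective b
    exact ⟨_, dehom_algebraMap R t r⟩
  ker := by
    intro a ha
    obtain ⟨r, m, rfl⟩ := dehom_exists_mk R t a
    rw [dehom_algebraMap_mk, Ideal.Quotient.eq_zero_iff_mem, Ideal.mem_span_singleton] at ha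
    obtain ⟨s, rfl⟩ := ha
    refine ⟨Localization.mk s ⟨t ^ m, (Submonoid.mem_powers_iff _ _).mpr ⟨m, rfl⟩⟩, ?_⟩
    rw [dehomUnit_val]
    have hu : IsUnit (algebraMap R (Localization.Away t) t ^ m) :=
      (dehomUnit R t).isUnit.pow m
    rw [← hu.mul_left_inj, dehom_mk_mul, mul_assoc, dehom_mk_mul, map_mul, map_sub, map_one]
  u1 := by rw [dehomUnit_val, dehom_algebraMap, dehom_bar_t]
  hu := by
    intro n
    obtain ⟨m, rfl | rfl⟩ := n.eq_nat_or_neg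
    · rw [zpow_natCast, Units.val_pow_eq_pow_val, dehomUnit_val, ← map_pow, natCast_zsmul]
      exact dehom_map_mem_loc k Γ R 𝒜 γ t _ _ (SetLike.pow_mem_graded m ht)
    · have h := dehom_mem_loc k Γ R 𝒜 γ t (-((m : ℤ) • γ)) m 1
        (by rw [natCast_zsmul, neg_add_cancel]; exact SetLike.GradedOne.one_mem)
      have h2 := dehom_mk_mul R t 1 m ((Submonoid.mem_powers_iff _ _).mpr ⟨m, rfl⟩)
      rw [map_one, ← dehomUnit_val, ← Units.val_pow_eq_pow_val, mul_comm] at h2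
      rw [neg_smul, zpow_neg, zpow_natCast, ← Units.eq_inv_of_mul_eq_one_left h2]
      exact h
  inj := hinj
  span := by
    classical
    intro a
    obtain ⟨r, m, rfl⟩ := dehom_exists_mk R t a
    rw [← DirectSum.sum_support_decompose 𝒜 r, Localization.mk_sum]
    refine sum_mem fun δ _ => Submodule.mem_iSup_of_mem (δ - m • γ) ?_
    refine dehom_mem_loc k Γ R 𝒜 γ t _ m _ ?_
    rw [sub_add_cancel]
    exact SetLike.coe_mem _
  bar := by
    intro d b hb
    refine Submodule.span_mono ?_ hb
    rintro _ ⟨ε, hε, r, hr, rfl⟩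
    exact ⟨ε, hε, _, dehom_map_mem_loc k Γ R 𝒜 γ t ε r hr, (dehom_algebraMap R t r).symm⟩
  bar' := by
    intro δ a ha
    induction ha using Submodule.span_induction with
    | mem a ha =>
      obtain ⟨m, r, hr, rfl⟩ := ha
      rw [dehom_algebraMap_mk]
      refine Submodule.subset_span ⟨_, ?_, r, hr, rfl⟩
      rw [eq_comm, QuotientAddGroup.eq, neg_add_cancel_left]
      exact AddSubgroup.nsmul_mem _ (AddSubgroup.mem_zmultiples γ) m
    | zero => simp
    | add x y _ _ hx hy =>
      rw [map_add]
      exact add_mem hx hy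
    | smul c x _ hx =>
      rw [dehom_algebraMap_smul]
      exact Submodule.smul_mem _ _ hx

/-- `R_δ → R̄[Γ]`, sending `r` to `r̄ · δ`. -/
def dehomPsiComp (δ : Γ) : 𝒜 δ →ₗ[k] AddMonoidAlgebra (BarRing R t) Γ where
  toFun r := AddMonoidAlgebra.single δ (Ideal.Quotient.mk (Ideal.span {t - 1}) (r : R))
  map_add' x y := by
    rw [Submodule.coe_add, map_add, AddMonoidAlgebra.single_add]
  map_smul' c x := by
    rw [RingHom.id_apply, AddMonoidAlgebra.smul_single]
    rfl

/-- `R → R̄[Γ]`, sending `r ∈ R_δ` to `r̄ · δ`. -/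
def dehomPsiR : R →ₐ[k] AddMonoidAlgebra (BarRing R t) Γ :=
  (DirectSum.toAlgebra k (fun i => 𝒜 i) (dehomPsiComp k Γ R 𝒜 t) rfl
    (fun {i j} x y => by
      change AddMonoidAlgebra.single (i + j) (Ideal.Quotient.mk (Ideal.span {t - 1}) (x * y : R))
        = AddMonoidAlgebra.single i (Ideal.Quotient.mk (Ideal.span {t - 1}) (x : R))
          * AddMonoidAlgebra.single j (Ideal.Quotient.mk (Ideal.span {t - 1}) (y : R))
      rw [AddMonoidAlgebra.single_mul_single, map_mul])).comp
    (DirectSum.decomposeAlgEquiv 𝒜).toAlgHom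

theorem dehomPsiR_apply (δ : Γ) (r : R) (hr : r ∈ 𝒜 δ) :
    dehomPsiR k Γ R 𝒜 t r
      = AddMonoidAlgebra.single δ (Ideal.Quotient.mk (Ideal.span {t - 1}) r) := by
  change DirectSum.toModule k Γ _ (dehomPsiComp k Γ R 𝒜 t) (DirectSum.decompose 𝒜 r) = _
  rw [DirectSum.decompose_of_mem 𝒜 hr]
  exact DirectSum.toModule_lof (M := fun i => 𝒜 i) (φ := dehomPsiComp k Γ R 𝒜 t) k δ ⟨r, hr⟩

theorem dehom_exists_psi (ht : t ∈ 𝒜 γ) :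
    ∃ ψ : Localization.Away t →ₐ[k] AddMonoidAlgebra (BarRing R t) Γ,
      ∀ α, ∀ a ∈ locGrading k Γ R 𝒜 γ t α,
        ψ a = AddMonoidAlgebra.single α (algebraMap (Localization.Away t) (BarRing R t) a) := by
  have hpsit : dehomPsiR k Γ R 𝒜 t t = AddMonoidAlgebra.single γ 1 := by
    rw [dehomPsiR_apply k Γ R 𝒜 t γ t ht, dehom_bar_t]
  have hunit : IsUnit (dehomPsiR k Γ R 𝒜 t t) := by
    rw [hpsit]
    refine IsUnit.of_mul_eq_one (AddMonoidAlgebra.single (-γ) 1) ?_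
    rw [AddMonoidAlgebra.single_mul_single, add_neg_cancel, mul_one]
    rfl
  let ψ0 : Localization.Away t →+* AddMonoidAlgebra (BarRing R t) Γ :=
    Localization.awayLift (dehomPsiR k Γ R 𝒜 t : R →+* _) t hunit
  have hψ0 : ∀ r, ψ0 (algebraMap R _ r) = dehomPsiR k Γ R 𝒜 t r := fun r =>
    IsLocalization.Away.lift_eq t hunit r
  let ψ : Localization.Away t →ₐ[k] AddMonoidAlgebra (BarRing R t) Γ :=
    { ψ0 with
      commutes' := fun c => by
        change ψ0 _ = _
        rw [IsScalarTower.algebraMap_apply k R (Localization.Away t), hψ0]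
        exact AlgHom.commutes _ c }
  have hψ : ∀ r, ψ (algebraMap R _ r) = dehomPsiR k Γ R 𝒜 t r := hψ0
  refine ⟨ψ, fun α a ha => ?_⟩
  induction ha using Submodule.span_induction with
  | mem a ha =>
    obtain ⟨m, r, hr, rfl⟩ := ha
    rw [dehom_algebraMap_mk, ← (hunit.pow m).mul_left_inj, ← hψ, ← map_pow, ← map_mul,
      dehom_mk_mul, map_pow, hψ, hψ, hpsit, AddMonoidAlgebra.single_pow,
      AddMonoidAlgebra.single_mul_single, dehomPsiR_apply k Γ R 𝒜 t _ r hr, one_pow, mul_one]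
  | zero => simp
  | add x y _ _ hx hy => rw [map_add, map_add, hx, hy, AddMonoidAlgebra.single_add]
  | smul c x _ hx =>
    rw [map_smul, hx, dehom_algebraMap_smul,
      AddMonoidAlgebra.smul_single]

theorem dehomogenization_is_equivalence_of_graded_module_categories
    -- `Γ` is finitely generated of rank 1: `ν : Γ → ℤ` is surjective with finite kernel
    (hFG : AddGroup.FG Γ) (ν : Γ →+ ℤ) (hν : Function.Surjective ν)
    (hrank : Finite ↥ν.ker)
    -- `R` is connected: `R₀ = k`
    (hconn : 𝒜 0 = Submodule.span k {(1 : R)})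
    -- `ν` is positive on the degrees of the nonzero components of `R`
    (hpos : ∀ δ : Γ, δ ≠ 0 → 𝒜 δ ≠ ⊥ → 0 < ν δ)
    -- `t` is a nonzero homogeneous element of nonzero degree `γ`
    (hγ : γ ≠ 0) (ht : t ∈ 𝒜 γ) (ht0 : t ≠ 0) :
    -- (1) the functor takes values in `Γ̄`-graded `R/(t−1)`-modules
    (∀ M : GradedMod k (Localization.Away t) Γ (locGrading k Γ R 𝒜 γ t),
      DirectSum.IsInternal (FGrading k Γ R 𝒜 γ t M) ∧
      ∀ (d e : Γ ⧸ AddSubgroup.zmultiples γ) (r : BarRing R t),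
        r ∈ barGrading k Γ R 𝒜 γ t d →
        ∀ z ∈ FGrading k Γ R 𝒜 γ t M e, r • z ∈ FGrading k Γ R 𝒜 γ t M (d + e)) ∧
    -- (2) it is fully faithful on degree-preserving homomorphisms
    (∀ M M' : GradedMod k (Localization.Away t) Γ (locGrading k Γ R 𝒜 γ t),
      Function.Bijective (inducedMap k Γ R 𝒜 γ t M M')) ∧
    -- (3) it is essentially surjective: every `Γ̄`-graded `R/(t−1)`-module is
    -- isomorphic, by a degree-preserving isomorphism, to the image of a `Γ`-graded
    -- `R[t⁻¹]`-module
    (∀ N : GradedMod k (BarRing R t) (Γ ⧸ AddSubgroup.zmultiples γ)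
        (barGrading k Γ R 𝒜 γ t),
      ∃ M : GradedMod k (Localization.Away t) Γ (locGrading k Γ R 𝒜 γ t),
      ∃ e : FCarrier k Γ R 𝒜 γ t M ≃ₗ[BarRing R t] N.carrier,
        ∀ d, (FGrading k Γ R 𝒜 γ t M d).map
            ((e : FCarrier k Γ R 𝒜 γ t M →ₗ[BarRing R t] N.carrier).restrictScalars k)
          = N.grading d) := by
  have hinj : ∀ n : ℤ, n • γ = 0 → n = 0 := by
    intro n hn
    have hγ' : 0 < ν γ := hpos γ hγ fun h => ht0 (by rw [h] at ht; exact ht)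
    have := congrArg ν hn
    rw [map_zsmul, map_zero, smul_eq_mul] at this
    exact (mul_eq_zero.mp this).resolve_right hγ'.ne'
  have H := dehom_holds k Γ R 𝒜 γ t ht hinj
  obtain ⟨ψ, hψ⟩ := dehom_exists_psi k Γ R 𝒜 γ t ht
  refine ⟨fun M => ⟨H.internal M, fun d e r hr z hz => H.gr_smul M d e r hr z hz⟩, ?_, ?_⟩
  · intro M M'
    constructor
    · intro f f' h
      apply Subtype.ext
      exact H.faithful M M' f.1 f'.1 (fun δ m hm => f.2 δ ⟨m, hm, rfl⟩)
        (fun δ m hm => f'.2 δ ⟨m, hm, rfl⟩) (congrArg Subtype.val h)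
    · intro g
      obtain ⟨f, hf, h⟩ := H.full M M' g.1 (fun d z hz => g.2 d ⟨z, hz, rfl⟩)
      refine ⟨⟨f, fun δ => ?_⟩, Subtype.ext h⟩
      rintro _ ⟨m, hm, rfl⟩
      exact hf δ m hm
  · intro N
    exact H.essSurj N ψ hψ

end Statement17

end
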